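/- For every nonnegative integer n, the gauge Hamiltonian \bar H_2 = 4 T_2 + 4(1−2a) J^0 + 2Na², where T_2 = Σ_{i=1}^N z_i² ∂_i² + 2a Σ_{i=1}^N (z_i − z_{i+1})^{-1}(z_i² ∂_i − z_{i+1}² ∂_{i+1}) − 2a Σ_{i=1}^N z_i z_{i+1} (z_i − z_{i+1})^{-2}(1 − K_{i,i+1}) and J^0 = Σ_i z_i ∂_i, leaves invariant the space 𝒯_2^n spanned by all elements of the form f(σ_1,τ_{N−1},τ_N) Λ|s⟩, g(τ_{N−1},τ_N) Λ(z_1|s⟩), and q(σ_1,τ_N) Λ(z_2 z_3⋯z_N |s⟩), where |s⟩ ranges over Σ, f is a polynomial in σ_1, τ_{N−1}, τ_N of degree at most 1 in σ_1 and at most 1 in τ_{N−1} with total z-degree at most n, g is a polynomial in τ_{N−1}, τ_N of degree at most 1 in τ_{N−1} with total z-degree at most n−1, and q is a polynomial in σ_1, τ_N of degree at most 1 in σ_1 with total z-degree at most n−N+1. (K_{i,i+1} exchanges the variables z_i and z_{i+1}, acting trivially on the spin component; the assertion includes the claim that \bar H_2 applied to such an element, computed in the field of rational functions, is again a Σ-valued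 polynomial in 𝒯_2^n.) -/

import Mathlib

noncomputable section

open MvPolynomial

/-- Polynomials in `N` variables over `ℂ`. -/
abbrev MvP (N : ℕ) : Type := MvPolynomial (Fin N) ℂ

/-- The spin space `Σ`: complex functions on `Fin N → Fin d`. -/
abbrev SpinV (N d : ℕ) : Type := (Fin N → Fin d) → ℂ

/-- `Σ`-valued polynomials. -/
abbrev SpinPoly (N d : ℕ) : Type := (Fin N → Fin d) → MvP N

/-- The canonical embedding of polynomials into the field of rational functions. -/
noncomputable def phi (N : ℕ) : MvP N →+* FractionRing (MvP N) :=
  algebraMap (MvP N) (FractionRing (MvP N))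

/-- The power sum `σ_k = ∑ i, z_i ^ k`. -/
def sig (N k : ℕ) : MvP N := ∑ i : Fin N, X i ^ k

/-- The top elementary symmetric polynomial `τ_N = ∏ i, z_i`. -/
def tauTop (N : ℕ) : MvP N := ∏ i : Fin N, X i

/-- The elementary symmetric polynomial `τ_{N-1} = ∑ i, ∏_{j ≠ i} z_j`. -/
def tauSub (N : ℕ) : MvP N := ∑ i : Fin N, ∏ j ∈ Finset.univ.erase i, X j

/-- The action of a permutation `π ∈ S_N` on the spin space, permuting the `N` spin slots. -/
def spinPerm {N d : ℕ} (π : Equiv.Perm (Fin N)) (v : SpinV N d) : SpinV N d :=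
  fun c => v (c ∘ π)

/-- The spin vector `|s_i⟩ = (1/N!) ∑_{π ∈ S_N, π(1) = i} π |s⟩`. -/
noncomputable def sComp {N d : ℕ} [NeZero N] (s : SpinV N d) (i : Fin N) : SpinV N d :=
  (N.factorial : ℂ)⁻¹ •
    ∑ π ∈ Finset.univ.filter (fun π : Equiv.Perm (Fin N) => π 0 = i), spinPerm π s

/-- The symmetrization `Λ|s⟩ = ∑ i, |s_i⟩`. -/
noncomputable def Lam {N d : ℕ} [NeZero N] (s : SpinV N d) : SpinV N d :=
  ∑ i : Fin N, sComp s i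

/-- The operator
`T_2 = ∑ i z_i² ∂_i² + 2a ∑ i (z_i - z_{i+1})⁻¹ (z_i² ∂_i - z_{i+1}² ∂_{i+1})
  - 2a ∑ i z_i z_{i+1} (z_i - z_{i+1})⁻² (1 - K_{i,i+1})`
(indices cyclic, `K_{i,i+1}` exchanging the variables `z_i` and `z_{i+1}`),
computed in the field of rational functions. -/
noncomputable def T2op (N : ℕ) [NeZero N] (a : ℝ) (f : MvP N) : FractionRing (MvP N) :=
  (∑ i : Fin N, phi N (X i ^ 2 * pderiv i (pderiv i f)))
  + phi N (C ((2 * a : ℝ) : ℂ)) *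
      ∑ i : Fin N, (phi N (X i - X (i + 1)))⁻¹ *
        phi N (X i ^ 2 * pderiv i f - X (i + 1) ^ 2 * pderiv (i + 1) f)
  - phi N (C ((2 * a : ℝ) : ℂ)) *
      ∑ i : Fin N, phi N (X i * X (i + 1)) * ((phi N (X i - X (i + 1)))⁻¹) ^ 2 *
        phi N (f - rename (Equiv.swap i (i + 1)) f)

/-- The gauge Hamiltonian `H̄_2 = 4 T_2 + 4(1 - 2a) J⁰ + 2Na²`, acting componentwise on
`Σ`-valued polynomials and computed in the field of rational functions. -/
noncomputable def Hbar2op (N : ℕ) [NeZero N] (a : ℝ) (f : MvP N) : FractionRing (MvP N) :=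
  phi N (C ((4 : ℝ) : ℂ)) * T2op N a f
  + phi N (C ((4 * (1 - 2 * a) : ℝ) : ℂ)) * ∑ i : Fin N, phi N (X i * pderiv i f)
  + phi N (C ((2 * N * a ^ 2 : ℝ) : ℂ)) * phi N f

/-- Generators of type `f(σ_1, τ_{N-1}, τ_N) Λ|s⟩`, where `f` has degree at most `1` in `σ_1`
and in `τ_{N-1}`, and total `z`-degree at most `n`. -/
def T2genF (N d n : ℕ) [NeZero N] : Set (SpinPoly N d) :=
  {Φ | ∃ (s : SpinV N d) (F : MvPolynomial (Fin 3) ℂ),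
    F.degreeOf 0 ≤ 1 ∧ F.degreeOf 1 ≤ 1 ∧
    (aeval ![sig N 1, tauSub N, tauTop N] F : MvP N).totalDegree ≤ n ∧
    Φ = fun c => C (Lam s c) * aeval ![sig N 1, tauSub N, tauTop N] F}

/-- Generators of type `g(τ_{N-1}, τ_N) Λ(z_1 |s⟩)`, where `g` has degree at most `1` in
`τ_{N-1}` and total `z`-degree at most `n - 1`. -/
def T2genG (N d n : ℕ) [NeZero N] : Set (SpinPoly N d) :=
  {Φ | ∃ (s : SpinV N d) (G : MvPolynomial (Fin 2) ℂ),
    G.degreeOf 0 ≤ 1 ∧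
    (aeval ![tauSub N, tauTop N] G : MvP N).totalDegree + 1 ≤ n ∧
    Φ = fun c => ∑ i : Fin N, C (sComp s i c) * (X i * aeval ![tauSub N, tauTop N] G)}

/-- Generators of type `q(σ_1, τ_N) Λ(z_2 ⋯ z_N |s⟩)`, where `q` has degree at most `1` in
`σ_1` and total `z`-degree at most `n - N + 1`. -/
def T2genQ (N d n : ℕ) [NeZero N] : Set (SpinPoly N d) :=
  {Φ | ∃ (s : SpinV N d) (Q : MvPolynomial (Fin 2) ℂ),
    Q.degreeOf 0 ≤ 1 ∧
    (aeval ![sig N 1, tauTop N] Q : MvP N).totalDegree + (N - 1) ≤ n ∧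
    Φ = fun c => ∑ i : Fin N,
      C (sComp s i c) * ((∏ j ∈ Finset.univ.erase i, X j) * aeval ![sig N 1, tauTop N] Q)}

/-- The space `𝒯_2^n`. -/
noncomputable def T2space (N d n : ℕ) [NeZero N] : Submodule ℂ (SpinPoly N d) :=
  Submodule.span ℂ (T2genF N d n ∪ T2genG N d n ∪ T2genQ N d n)

/-- Euler operator `z_i ∂_i`. -/
def th {N : ℕ} (i : Fin N) (f : MvP N) : MvP N := X i * pderiv i f

/-- `∏_{j ≠ i} z_j`. -/
def ww {N : ℕ} (i : Fin N) : MvP N := ∏ j ∈ Finset.univ.erase i, X j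

lemma th_add {N : ℕ} (i : Fin N) (f g : MvP N) : th i (f + g) = th i f + th i g := by
  simp [th, mul_add]

lemma th_mul {N : ℕ} (i : Fin N) (f g : MvP N) : th i (f * g) = th i f * g + f * th i g := by
  simp only [th, Derivation.leibniz, smul_eq_mul]; ring

lemma th_zero {N : ℕ} (i : Fin N) : th i (0 : MvP N) = 0 := by simp [th]

lemma th_C {N : ℕ} (i : Fin N) (r : ℂ) : th i (C r : MvP N) = 0 := by simp [th]

lemma th_one {N : ℕ} (i : Fin N) : th i (1 : MvP N) = 0 := by simp [th]

lemma th_C_mul {N : ℕ} (i : Fin N) (r : ℂ) (f : MvP N) : th i (C r * f) = C r * th i f := by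
  rw [th_mul, th_C]; ring

lemma th_sub {N : ℕ} (i : Fin N) (f g : MvP N) : th i (f - g) = th i f - th i g := by
  simp [th, mul_sub]

lemma th_sum {N : ℕ} (i : Fin N) {ι : Type*} (s : Finset ι) (f : ι → MvP N) :
    th i (∑ k ∈ s, f k) = ∑ k ∈ s, th i (f k) := by
  simp [th, Finset.mul_sum]

lemma th_X {N : ℕ} (i m : Fin N) : th i (X m : MvP N) = if i = m then X m else 0 := by
  unfold th
  rw [pderiv_X]
  by_cases h : i = m
  · subst h; simp
  · simp [h]

lemma sq_pd {N : ℕ} (i : Fin N) (f : MvP N) :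
    X i ^ 2 * pderiv i (pderiv i f) = th i (th i f) - th i f := by
  simp only [th, Derivation.leibniz, smul_eq_mul, pderiv_X_self]; ring

lemma th_prod {N : ℕ} (i : Fin N) (s : Finset (Fin N)) :
    th i (∏ j ∈ s, (X j : MvP N)) = if i ∈ s then ∏ j ∈ s, X j else 0 := by
  induction s using Finset.induction_on with
  | empty => simp [th]
  | insert b s hb ih =>
    rw [Finset.prod_insert hb, th_mul, ih, th_X]
    by_cases h : i = b
    · subst h; simp [hb]
    · simp [h]

lemma th_ww {N : ℕ} (i m : Fin N) : th i (ww m : MvP N) = if i = m then 0 else ww m := by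
  unfold ww; rw [th_prod]; by_cases h : i = m <;> simp [h]

lemma th_tau {N : ℕ} (i : Fin N) : th i (tauTop N) = tauTop N := by
  unfold tauTop; rw [th_prod]; simp

lemma X_ww {N : ℕ} (m : Fin N) : X m * ww m = tauTop N := by
  unfold ww tauTop; rw [Finset.mul_prod_erase]; simp

lemma tauSub_eq (N : ℕ) : tauSub N = ∑ i : Fin N, ww i := rfl

lemma th_tauSub {N : ℕ} (i : Fin N) : th i (tauSub N) = tauSub N - ww i := by
  rw [tauSub_eq, th_sum]
  simp only [th_ww]
  rw [eq_sub_iff_add_eq, ← Finset.sum_erase_add _ _ (Finset.mem_univ i),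
    ← Finset.sum_erase_add Finset.univ _ (Finset.mem_univ i)]
  simp only [if_true, add_zero, add_left_inj]
  apply Finset.sum_congr rfl
  intro x hx
  rw [if_neg (Finset.ne_of_mem_erase hx).symm]

lemma sig_eq (N : ℕ) : sig N 1 = ∑ i : Fin N, X i := by simp [sig]

lemma th_sig {N : ℕ} (i : Fin N) : th i (sig N 1) = X i := by
  rw [sig_eq, th_sum]; simp [th_X]

lemma th_tau_pow {N : ℕ} (i : Fin N) (k : ℕ) :
    th i (tauTop N ^ k) = (k : MvP N) * tauTop N ^ k := by
  induction k with
  | zero => simp [th_one]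
  | succ k ih => rw [pow_succ, th_mul, ih, th_tau]; push_cast; ring

lemma ren_tau {N : ℕ} (e : Equiv.Perm (Fin N)) : rename e (tauTop N) = tauTop N := by
  unfold tauTop; rw [map_prod]; simp only [rename_X]
  exact Equiv.prod_comp e (fun i => (X i : MvP N))

lemma ren_sig {N : ℕ} (e : Equiv.Perm (Fin N)) : rename e (sig N 1) = sig N 1 := by
  rw [sig_eq, map_sum]; simp only [rename_X]
  exact Equiv.sum_comp e (fun i => (X i : MvP N))

lemma ren_ww {N : ℕ} (e : Equiv.Perm (Fin N)) (m : Fin N) : rename e (ww m) = ww (e m) := by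
  have h := congrArg (rename e) (X_ww m)
  rw [ren_tau, map_mul, rename_X, ← X_ww (e m)] at h
  exact mul_left_cancel₀ (X_ne_zero _) h

lemma ren_tauSub {N : ℕ} (e : Equiv.Perm (Fin N)) : rename e (tauSub N) = tauSub N := by
  rw [tauSub_eq, map_sum]; simp only [ren_ww]
  exact Equiv.sum_comp e (fun i => (ww i : MvP N))

/-- Polynomial form of the `(i,j)` summand of the `a`-dependent part. -/
def RR {N : ℕ} (i j : Fin N) (f e : MvP N) : Prop :=
  (X i - X j) * (X i * th i f - X j * th j f) - X i * X j * (f - rename (Equiv.swap i j) f)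
    = (X i - X j) ^ 2 * e

def HasE {N : ℕ} [NeZero N] (f e : MvP N) : Prop :=
  ∃ e' : Fin N → MvP N, (∀ i, RR i (i + 1) f (e' i)) ∧ ∑ i, e' i = e

def HasSym {N : ℕ} [NeZero N] (p P : MvP N) : Prop :=
  ∃ p' : Fin N → MvP N, (∀ i, rename (Equiv.swap i (i + 1)) p = p ∧
    X i * th i p - X (i + 1) * th (i + 1) p = (X i - X (i + 1)) * p' i) ∧ ∑ i, p' i = P

lemma HasE.sum {N : ℕ} [NeZero N] {ι : Type*} (s : Finset ι) (f e : ι → MvP N)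
    (h : ∀ k ∈ s, HasE (f k) (e k)) : HasE (∑ k ∈ s, f k) (∑ k ∈ s, e k) := by
  classical
  induction s using Finset.induction_on with
  | empty => exact ⟨fun _ => 0, by simp [RR, th_zero], by simp⟩
  | insert b s hb ih =>
    rw [Finset.sum_insert hb, Finset.sum_insert hb]
    obtain ⟨u, hu, hu'⟩ := h b (by simp)
    obtain ⟨v, hv, hv'⟩ := ih (fun k hk => h k (by simp [hk]))
    refine ⟨fun i => u i + v i, fun i => ?_, by rw [Finset.sum_add_distrib, hu', hv']⟩
    have h1 := hu i
    have h2 := hv i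
    unfold RR at *
    rw [th_add, th_add, map_add]
    linear_combination h1 + h2

lemma HasSym.mulE {N : ℕ} [NeZero N] {p P f e : MvP N} (hp : HasSym p P) (hf : HasE f e) :
    HasE (p * f) (P * f + p * e) := by
  obtain ⟨u, hu, rfl⟩ := hp
  obtain ⟨v, hv, rfl⟩ := hf
  refine ⟨fun i => u i * f + p * v i, fun i => ?_, by
    rw [Finset.sum_add_distrib, Finset.sum_mul, Finset.mul_sum]⟩
  obtain ⟨h1, h2⟩ := hu i
  have h3 := hv i
  unfold RR at *
  rw [th_mul, th_mul, map_mul, h1]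
  linear_combination (X i - X (i + 1)) * f * h2 + p * h3

lemma HasSym.mul {N : ℕ} [NeZero N] {p P f e : MvP N} (hp : HasSym p P) (hf : HasSym f e) :
    HasSym (p * f) (P * f + p * e) := by
  obtain ⟨u, hu, rfl⟩ := hp
  obtain ⟨v, hv, rfl⟩ := hf
  refine ⟨fun i => u i * f + p * v i, fun i => ?_, by
    rw [Finset.sum_add_distrib, Finset.sum_mul, Finset.mul_sum]⟩
  obtain ⟨h1, h2⟩ := hu i
  obtain ⟨h3, h4⟩ := hv i
  refine ⟨by rw [map_mul, h1, h3], ?_⟩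
  rw [th_mul, th_mul]
  linear_combination f * h2 + p * h4

lemma HasSym.C {N : ℕ} [NeZero N] (r : ℂ) : HasSym (C r : MvP N) 0 :=
  ⟨fun _ => 0, fun i => by simp [th_C], by simp⟩

lemma HasSym.one {N : ℕ} [NeZero N] : HasSym (1 : MvP N) 0 :=
  ⟨fun _ => 0, fun i => by simp [th_one], by simp⟩

lemma HasSym.toE {N : ℕ} [NeZero N] {p P : MvP N} (h : HasSym p P) : HasE p P := by
  have h1 : HasE (1 : MvP N) 0 := ⟨fun _ => 0, fun i => by simp [RR, th_one], by simp⟩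
  simpa using h.mulE h1

lemma HasSym.sig {N : ℕ} [NeZero N] : HasSym (sig N 1) (2 * sig N 1) := by
  refine ⟨fun i => X i + X (i + 1), fun i => ⟨ren_sig _, ?_⟩, ?_⟩
  · rw [th_sig, th_sig]; ring
  · rw [Finset.sum_add_distrib, sig_eq, two_mul]
    congr 1
    exact Equiv.sum_comp (Equiv.addRight (1 : Fin N)) (fun i => (X i : MvP N))

lemma HasSym.tauSub {N : ℕ} [NeZero N] : HasSym (tauSub N) (N * tauSub N) := by
  refine ⟨fun i => _root_.tauSub N, fun i => ⟨ren_tauSub _, ?_⟩, by simp⟩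
  rw [th_tauSub, th_tauSub]
  linear_combination X_ww (i + 1) - X_ww i

lemma HasSym.tau {N : ℕ} [NeZero N] : HasSym (tauTop N) (N * tauTop N) := by
  refine ⟨fun i => tauTop N, fun i => ⟨ren_tau _, ?_⟩, by simp⟩
  rw [th_tau, th_tau]; ring

lemma HasSym.tauPow {N : ℕ} [NeZero N] (k : ℕ) :
    HasSym (tauTop N ^ k) (k * N * tauTop N ^ k) := by
  induction k with
  | zero => simpa using HasSym.one
  | succ k ih =>
    have := ih.mul HasSym.tau
    rw [pow_succ]
    convert this using 1
    push_cast; ring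

lemma succ_ne {N : ℕ} [NeZero N] (hN : 3 ≤ N) (i : Fin N) : i ≠ i + 1 := by
  intro h
  have h1 : (1 : Fin N) = 0 := by
    have := h.symm
    rwa [add_eq_left] at this
  have := congrArg Fin.val h1
  rw [Fin.val_zero, Fin.val_one', Nat.mod_eq_of_lt (by omega)] at this
  omega

lemma HasE_X {N : ℕ} [NeZero N] (hN : 3 ≤ N) (m : Fin N) : HasE (X m : MvP N) (2 * X m) := by
  refine ⟨fun i => (if i = m then X m else 0) + (if i + 1 = m then X m else 0), fun i => ?_, ?_⟩
  · have hne := succ_ne hN i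
    unfold RR
    rw [rename_X, th_X, th_X]
    by_cases h1 : i = m
    · subst h1
      simp [hne.symm]; ring
    · by_cases h2 : i + 1 = m
      · subst h2
        simp [hne]; ring
      · rw [Equiv.swap_apply_of_ne_of_ne (Ne.symm h1) (Ne.symm h2)]
        simp [h1, h2]
  · rw [Finset.sum_add_distrib, two_mul]
    congr 1
    · simp
    · refine (Equiv.sum_comp (Equiv.addRight (1 : Fin N))
        (fun i => if i = m then (X m : MvP N) else 0)).trans ?_
      simp

lemma HasE_ww {N : ℕ} [NeZero N] (hN : 3 ≤ N) (m : Fin N) : HasE (ww m : MvP N) (N * ww m) := by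
  refine ⟨fun i => _root_.ww m, fun i => ?_, by simp⟩
  have hne := succ_ne hN i
  unfold RR
  rw [ren_ww, th_ww, th_ww]
  have e1 := X_ww i
  have e2 := X_ww (i + 1)
  by_cases h1 : i = m
  · subst h1
    simp only [if_true, Equiv.swap_apply_left, if_neg hne.symm]
    linear_combination (-MvPolynomial.X i) * e1 + (MvPolynomial.X i) * e2
  · by_cases h2 : i + 1 = m
    · subst h2
      simp only [if_true, Equiv.swap_apply_right, if_neg hne]
      linear_combination (-MvPolynomial.X (i + 1)) * e2 + (MvPolynomial.X (i + 1)) * e1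
    · rw [Equiv.swap_apply_of_ne_of_ne (Ne.symm h1) (Ne.symm h2), if_neg h1, if_neg h2]
      ring

/-- `∑ z_i² ∂_i²`. -/
def D2 {N : ℕ} (f : MvP N) : MvP N := ∑ i, (th i (th i f) - th i f)

def GG {N : ℕ} (f g : MvP N) : MvP N := ∑ i, th i f * th i g

def JJ {N : ℕ} (f : MvP N) : MvP N := ∑ i, th i f

lemma D2_mul {N : ℕ} (f g : MvP N) : D2 (f * g) = D2 f * g + f * D2 g + 2 * GG f g := by
  unfold D2 GG
  simp only [Finset.sum_mul, Finset.mul_sum, ← Finset.sum_add_distrib]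
  refine Finset.sum_congr rfl fun i _ => ?_
  simp only [th_mul, th_add]; ring

lemma JJ_mul {N : ℕ} (f g : MvP N) : JJ (f * g) = JJ f * g + f * JJ g := by
  unfold JJ
  simp only [Finset.sum_mul, Finset.mul_sum, ← Finset.sum_add_distrib, th_mul]

lemma D2_sum {N : ℕ} {ι : Type*} (s : Finset ι) (f : ι → MvP N) :
    D2 (∑ k ∈ s, f k) = ∑ k ∈ s, D2 (f k) := by
  unfold D2; rw [Finset.sum_comm]; simp [th_sum, Finset.sum_sub_distrib]

lemma JJ_sum {N : ℕ} {ι : Type*} (s : Finset ι) (f : ι → MvP N) :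
    JJ (∑ k ∈ s, f k) = ∑ k ∈ s, JJ (f k) := by
  unfold JJ; rw [Finset.sum_comm]; simp [th_sum]

lemma JJ_C_mul {N : ℕ} (r : ℂ) (f : MvP N) : JJ (C r * f) = C r * JJ f := by
  simp [JJ, th_C_mul, Finset.mul_sum]

lemma D2_C_mul {N : ℕ} (r : ℂ) (f : MvP N) : D2 (C r * f) = C r * D2 f := by
  simp [D2, th_C_mul, Finset.mul_sum, mul_sub]

lemma T2_of {N : ℕ} [NeZero N] (hN : 3 ≤ N) (a : ℝ) (f e : MvP N) (h : HasE f e) :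
    T2op N a f = phi N (D2 f + C ((2 * a : ℝ) : ℂ) * e) := by
  obtain ⟨u, hu, rfl⟩ := h
  unfold T2op
  simp only [sq_pd]
  rw [add_sub_assoc, ← mul_sub, ← Finset.sum_sub_distrib, ← map_sum, map_add, map_mul]
  congr 1
  · rw [map_sum]
    congr 1
    refine Finset.sum_congr rfl fun i _ => ?_
    have hne : phi N (X i - X (i + 1)) ≠ 0 := by
      unfold phi
      rw [Ne, FaithfulSMul.algebraMap_eq_zero_iff, sub_eq_zero]
      exact fun h => succ_ne hN i (X_injective h)
    have h := congrArg (phi N) (hu i)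
    have e1 : X i ^ 2 * pderiv i f - X (i + 1) ^ 2 * pderiv (i + 1) f
      = X i * th i f - X (i + 1) * th (i + 1) f := by unfold th; ring
    rw [e1]
    generalize X i * th i f - X (i + 1) * th (i + 1) f = y at h
    generalize (X i : MvP N) - X (i + 1) = x at h hne
    rw [map_sub, map_mul, map_mul _ _ (f - _), map_mul _ (x ^ 2), map_pow] at h
    field_simp
    linear_combination h

/-- The key computation. -/
lemma key {N : ℕ} [NeZero N] (hN : 3 ≤ N) (a : ℝ) (lam mu nu m : ℂ) (k : ℕ) :
    ∃ A B : ℂ, ∀ p r : MvP N, JJ p = C m * p → D2 p = C lam * p + C mu * r →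
      HasE p (C nu * p) →
      Hbar2op N a (tauTop N ^ k * p) =
        phi N (C A * (tauTop N ^ k * p) + C B * (tauTop N ^ k * r)) := by
  refine ⟨4 * (lam + N * (k * k - k) + 2 * k * m + 2 * a * (k * N + nu))
    + 4 * (1 - 2 * a) * (k * N + m) + 2 * N * a ^ 2, 4 * mu, fun p r hJ hD hE => ?_⟩
  have hE' := (HasSym.tauPow (N := N) k).mulE hE
  have hcN : (C (N : ℂ) : MvP N) = (N : MvP N) := map_natCast C N
  have hck : (C (k : ℂ) : MvP N) = (k : MvP N) := map_natCast C k
  have hJt : JJ (tauTop N ^ k) = k * N * tauTop N ^ k := by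
    simp only [JJ, th_tau_pow]; simp; ring
  have hc : ∀ i, th i ((k : MvP N)) = 0 := fun i => by rw [← hck, th_C]
  have hDt : D2 (tauTop N ^ k) = N * (k * k - k) * tauTop N ^ k := by
    simp only [D2, th_tau_pow, th_mul, hc]; simp; ring
  have hG : GG (tauTop N ^ k) p = k * tauTop N ^ k * JJ p := by
    simp only [GG, JJ, th_tau_pow, Finset.mul_sum]
  unfold Hbar2op
  rw [T2_of hN a _ _ hE']
  simp only [← map_mul, ← map_sum, ← map_add]
  congr 1
  change _ + _ * JJ (tauTop N ^ k * p) + _ = _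
  rw [JJ_mul, D2_mul, hG, hDt, hJt, hJ, hD]
  push_cast
  simp only [map_add, map_mul, map_sub, map_one, map_pow, hcN, hck, map_ofNat]
  ring
lemma hom_ww {N : ℕ} (m : Fin N) : (ww m : MvP N).IsHomogeneous (N - 1) := by
  have := IsHomogeneous.prod (R := ℂ) (Finset.univ.erase m) (fun j : Fin N => (X j : MvP N)) (fun _ => 1)
    (fun j _ => isHomogeneous_X _ j)
  simpa [Finset.card_erase_of_mem, ww] using this

lemma hom_tau (N : ℕ) : (tauTop N).IsHomogeneous N := by
  have := IsHomogeneous.prod (R := ℂ) Finset.univ (fun j : Fin N => (X j : MvP N)) (fun _ => 1)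
    (fun j _ => isHomogeneous_X _ j)
  simpa [tauTop] using this

lemma hom_tauSub (N : ℕ) : (tauSub N).IsHomogeneous (N - 1) :=
  IsHomogeneous.sum _ _ _ fun i _ => hom_ww i

lemma hom_sig (N : ℕ) : (sig N 1).IsHomogeneous 1 := by
  rw [sig_eq]; exact IsHomogeneous.sum _ _ _ fun i _ => isHomogeneous_X _ i

/-- Truncation by weighted degree. -/
lemma trunc {N r : ℕ} (v : Fin r → MvP N) (w : Fin r → ℕ) (hv : ∀ j, (v j).IsHomogeneous (w j))
    (F : MvPolynomial (Fin r) ℂ) (n : ℕ) (h : (aeval v F : MvP N).totalDegree ≤ n) :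
    (aeval v F : MvP N) = ∑ m ∈ F.support.filter (fun m => ∑ j, m j * w j ≤ n),
      C (F.coeff m) * ∏ j, v j ^ m j := by
  have hterm : ∀ m : Fin r →₀ ℕ,
      (C (F.coeff m) * ∏ j, v j ^ m j : MvP N).IsHomogeneous (∑ j, m j * w j) := by
    intro m
    have h1 : (∏ j, v j ^ m j : MvP N).IsHomogeneous (∑ j, m j * w j) := by
      apply IsHomogeneous.prod
      intro j _
      rw [mul_comm]
      exact (hv j).pow _
    simpa using (isHomogeneous_C (Fin N) (F.coeff m)).mul h1
  have h0 : (aeval v F : MvP N) = ∑ m ∈ F.support, C (F.coeff m) * ∏ j, v j ^ m j := by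
    rw [aeval_def, eval₂_eq']; rfl
  have h1 : (aeval v F : MvP N) =
      ∑ k ∈ Finset.range (n + 1), homogeneousComponent k (aeval v F : MvP N) := by
    conv_lhs => rw [← sum_homogeneousComponent (aeval v F : MvP N)]
    apply Finset.sum_subset
    · intro k hk
      simp only [Finset.mem_range] at *
      omega
    · intro k _ hk
      apply homogeneousComponent_eq_zero
      simp only [Finset.mem_range] at hk
      omega
  rw [h1, h0]
  simp only [map_sum]
  rw [Finset.sum_comm, Finset.sum_filter]
  refine Finset.sum_congr rfl fun m _ => ?_
  have h2 : ∀ k, homogeneousComponent k (C (F.coeff m) * ∏ j, v j ^ m j : MvP N) =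
      if k = ∑ j, m j * w j then C (F.coeff m) * ∏ j, v j ^ m j else 0 := by
    intro k
    rw [homogeneousComponent_of_mem (hterm m)]
  simp only [h2, Finset.sum_ite_eq', Finset.mem_range, Nat.lt_succ_iff]

lemma deg_le_of_mem {r : ℕ} {F : MvPolynomial (Fin r) ℂ} {m : Fin r →₀ ℕ} (hm : m ∈ F.support)
    (i : Fin r) : m i ≤ F.degreeOf i := monomial_le_degreeOf i hm

def mF {N d : ℕ} [NeZero N] (s : SpinV N d) (α β k : ℕ) : SpinPoly N d :=
  fun c => tauTop N ^ k * (C (Lam s c) * (sig N 1 ^ α * tauSub N ^ β))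

def mG {N d : ℕ} [NeZero N] (s : SpinV N d) (β k : ℕ) : SpinPoly N d :=
  fun c => tauTop N ^ k * ∑ i : Fin N, C (sComp s i c) * (X i * tauSub N ^ β)

def mQ {N d : ℕ} [NeZero N] (s : SpinV N d) (α k : ℕ) : SpinPoly N d :=
  fun c => tauTop N ^ k * ∑ i : Fin N, C (sComp s i c) * (ww i * sig N 1 ^ α)

lemma degreeOf_mon {r : ℕ} (m : Fin r →₀ ℕ) (i : Fin r) :
    (monomial m (1 : ℂ)).degreeOf i = m i := degreeOf_monomial_eq _ _ one_ne_zero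

lemma mF_mem {N d n : ℕ} [NeZero N] (s : SpinV N d) (α β k : ℕ) (hα : α ≤ 1) (hβ : β ≤ 1)
    (h : α + β * (N - 1) + k * N ≤ n) : mF s α β k ∈ T2space N d n := by
  apply Submodule.subset_span
  left; left
  have e : (aeval ![sig N 1, tauSub N, tauTop N]
      (monomial (Finsupp.equivFunOnFinite.symm ![α, β, k]) (1 : ℂ)) : MvP N)
      = sig N 1 ^ α * tauSub N ^ β * tauTop N ^ k := by
    rw [aeval_monomial, Finsupp.prod_fintype _ _ (by simp)]
    simp [Fin.prod_univ_three]
  refine ⟨s, monomial (Finsupp.equivFunOnFinite.symm ![α, β, k]) 1, ?_, ?_, ?_, ?_⟩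
  · rw [degreeOf_mon]; simpa using hα
  · rw [degreeOf_mon]; simpa using hβ
  · rw [e]
    refine le_trans (IsHomogeneous.totalDegree_le
      ((((hom_sig N).pow α).mul ((hom_tauSub N).pow β)).mul ((hom_tau N).pow k))) ?_
    nlinarith
  · rw [e]; funext c; simp only [mF]; ring

lemma mG_mem {N d n : ℕ} [NeZero N] (s : SpinV N d) (β k : ℕ) (hβ : β ≤ 1)
    (h : β * (N - 1) + k * N + 1 ≤ n) : mG s β k ∈ T2space N d n := by
  apply Submodule.subset_span
  left; right
  have e : (aeval ![tauSub N, tauTop N]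
      (monomial (Finsupp.equivFunOnFinite.symm ![β, k]) (1 : ℂ)) : MvP N)
      = tauSub N ^ β * tauTop N ^ k := by
    rw [aeval_monomial, Finsupp.prod_fintype _ _ (by simp)]
    simp [Fin.prod_univ_two]
  refine ⟨s, monomial (Finsupp.equivFunOnFinite.symm ![β, k]) 1, ?_, ?_, ?_⟩
  · rw [degreeOf_mon]; simpa using hβ
  · rw [e]
    refine le_trans (Nat.add_le_add_right (IsHomogeneous.totalDegree_le
      (((hom_tauSub N).pow β).mul ((hom_tau N).pow k))) 1) ?_
    nlinarith
  · rw [e]; funext c; simp only [mG, Finset.mul_sum]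
    refine Finset.sum_congr rfl fun i _ => ?_
    ring

lemma mQ_mem {N d n : ℕ} [NeZero N] (s : SpinV N d) (α k : ℕ) (hα : α ≤ 1)
    (h : α + k * N + (N - 1) ≤ n) : mQ s α k ∈ T2space N d n := by
  apply Submodule.subset_span
  right
  have e : (aeval ![sig N 1, tauTop N]
      (monomial (Finsupp.equivFunOnFinite.symm ![α, k]) (1 : ℂ)) : MvP N)
      = sig N 1 ^ α * tauTop N ^ k := by
    rw [aeval_monomial, Finsupp.prod_fintype _ _ (by simp)]
    simp [Fin.prod_univ_two]
  refine ⟨s, monomial (Finsupp.equivFunOnFinite.symm ![α, k]) 1, ?_, ?_, ?_⟩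
  · rw [degreeOf_mon]; simpa using hα
  · rw [e]
    refine le_trans (Nat.add_le_add_right (IsHomogeneous.totalDegree_le
      (((hom_sig N).pow α).mul ((hom_tau N).pow k))) (N - 1)) ?_
    have : 1 * α + N * k = α + k * N := by ring
    omega
  · rw [e]; funext c; simp only [mQ, Finset.mul_sum]
    refine Finset.sum_congr rfl fun i _ => ?_
    unfold ww
    ring

/-- The set of `Φ` mapped into `T2space`. -/
def Stab {N d : ℕ} [NeZero N] (a : ℝ) (n : ℕ) (Φ : SpinPoly N d) : Prop :=
  ∃ Φ' ∈ T2space N d n, ∀ c : Fin N → Fin d, phi N (Φ' c) = Hbar2op N a (Φ c)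

lemma H_add {N : ℕ} [NeZero N] (a : ℝ) (f g : MvP N) :
    Hbar2op N a (f + g) = Hbar2op N a f + Hbar2op N a g := by
  unfold Hbar2op T2op
  simp only [map_add, map_sub, map_mul, mul_add, mul_sub, Finset.sum_add_distrib,
    Finset.sum_sub_distrib]
  ring

lemma H_smul {N : ℕ} [NeZero N] (a : ℝ) (r : ℂ) (f : MvP N) :
    Hbar2op N a (r • f) = phi N (C r) * Hbar2op N a f := by
  have h1 : ∀ i, X i ^ 2 * pderiv i (pderiv i (C r * f)) = C r * (X i ^ 2 * pderiv i (pderiv i f)) := by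
    intro i; simp only [Derivation.leibniz, smul_eq_mul, pderiv_C, map_add, map_zero, mul_zero]; ring
  have h2 : ∀ i, pderiv i (C r * f) = C r * pderiv i f := by
    intro i; simp only [Derivation.leibniz, smul_eq_mul, pderiv_C]; ring
  have h3 : ∀ i j : Fin N, rename (Equiv.swap i j) (C r * f) = C r * rename (Equiv.swap i j) f := by
    intro i j; rw [map_mul, rename_C]
  have s1 : ∑ i : Fin N, phi N (X i ^ 2 * pderiv i (pderiv i (C r * f)))
      = phi N (C r) * ∑ i : Fin N, phi N (X i ^ 2 * pderiv i (pderiv i f)) := by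
    rw [Finset.mul_sum]; refine Finset.sum_congr rfl fun i _ => ?_
    rw [h1, map_mul]
  have s2 : ∑ i : Fin N, (phi N (X i - X (i + 1)))⁻¹ *
        phi N (X i ^ 2 * pderiv i (C r * f) - X (i + 1) ^ 2 * pderiv (i + 1) (C r * f))
      = phi N (C r) * ∑ i : Fin N, (phi N (X i - X (i + 1)))⁻¹ *
        phi N (X i ^ 2 * pderiv i f - X (i + 1) ^ 2 * pderiv (i + 1) f) := by
    rw [Finset.mul_sum]; refine Finset.sum_congr rfl fun i _ => ?_
    rw [h2, h2, mul_left_comm, mul_left_comm _ (C r), ← mul_sub, map_mul _ (C r)]; ring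
  have s3 : ∑ i : Fin N, phi N (X i * X (i + 1)) * ((phi N (X i - X (i + 1)))⁻¹) ^ 2 *
        phi N (C r * f - rename (Equiv.swap i (i + 1)) (C r * f))
      = phi N (C r) * ∑ i : Fin N, phi N (X i * X (i + 1)) * ((phi N (X i - X (i + 1)))⁻¹) ^ 2 *
        phi N (f - rename (Equiv.swap i (i + 1)) f) := by
    rw [Finset.mul_sum]; refine Finset.sum_congr rfl fun i _ => ?_
    rw [h3, ← mul_sub, map_mul _ (C r)]; ring
  have s4 : ∑ i : Fin N, phi N (X i * pderiv i (C r * f))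
      = phi N (C r) * ∑ i : Fin N, phi N (X i * pderiv i f) := by
    rw [Finset.mul_sum]; refine Finset.sum_congr rfl fun i _ => ?_
    rw [h2, mul_left_comm, map_mul _ (C r)]
  rw [smul_eq_C_mul]
  unfold Hbar2op T2op
  rw [s1, s2, s3, s4, map_mul _ (C r) f]
  ring

lemma Stab.add {N d : ℕ} [NeZero N] {a : ℝ} {n : ℕ} {Φ Ψ : SpinPoly N d}
    (h1 : Stab a n Φ) (h2 : Stab a n Ψ) : Stab a n (Φ + Ψ) := by
  obtain ⟨u, hu, hu'⟩ := h1
  obtain ⟨v, hv, hv'⟩ := h2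
  exact ⟨u + v, add_mem hu hv, fun c => by rw [Pi.add_apply, Pi.add_apply, map_add, H_add, hu', hv']⟩

lemma Stab.smul {N d : ℕ} [NeZero N] {a : ℝ} {n : ℕ} {Φ : SpinPoly N d} (r : ℂ)
    (h1 : Stab a n Φ) : Stab a n (r • Φ) := by
  obtain ⟨u, hu, hu'⟩ := h1
  exact ⟨r • u, Submodule.smul_mem _ r hu, fun c => by
    rw [Pi.smul_apply, Pi.smul_apply, H_smul, smul_eq_C_mul, map_mul, hu']⟩

lemma Stab.zero {N d : ℕ} [NeZero N] {a : ℝ} {n : ℕ} : Stab a n (0 : SpinPoly N d) :=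
  ⟨0, zero_mem _, fun c => by simp [Hbar2op, T2op]⟩

lemma Stab.sum {N d : ℕ} [NeZero N] {a : ℝ} {n : ℕ} {ι : Type*} (s : Finset ι)
    (f : ι → SpinPoly N d) (h : ∀ k ∈ s, Stab a n (f k)) : Stab a n (∑ k ∈ s, f k) :=
  Finset.sum_induction f (Stab a n) (fun _ _ => Stab.add) Stab.zero h

lemma two_term {N d : ℕ} [NeZero N] (hN : 3 ≤ N) (a : ℝ) (n : ℕ) (lam mu nu m : ℂ) (k : ℕ)
    (p r : SpinPoly N d)
    (hJ : ∀ c, JJ (p c) = C m * p c) (hD : ∀ c, D2 (p c) = C lam * p c + C mu * r c)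
    (hE : ∀ c, HasE (p c) (C nu * p c))
    (hp : (fun c => tauTop N ^ k * p c) ∈ T2space N d n)
    (hr : (fun c => tauTop N ^ k * r c) ∈ T2space N d n) :
    Stab a n (fun c => tauTop N ^ k * p c) := by
  obtain ⟨A, B, h⟩ := key hN a lam mu nu m k
  refine ⟨A • (fun c => tauTop N ^ k * p c) + B • (fun c => tauTop N ^ k * r c),
    add_mem (Submodule.smul_mem _ _ hp) (Submodule.smul_mem _ _ hr), fun c => ?_⟩
  rw [h _ _ (hJ c) (hD c) (hE c)]
  simp [smul_eq_C_mul]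

lemma JJ_ww {N : ℕ} [NeZero N] (m : Fin N) : JJ (ww m : MvP N) = (N - 1) * ww m := by
  simp only [JJ, th_ww]
  rw [Finset.sum_ite]
  simp [Finset.filter_ne', Finset.card_erase_of_mem]
  left
  rw [Nat.cast_sub (Nat.one_le_iff_ne_zero.mpr (NeZero.ne N))]; simp

lemma JJ_tauSub {N : ℕ} [NeZero N] : JJ (tauSub N) = (N - 1) * tauSub N := by
  rw [tauSub_eq, JJ_sum, Finset.mul_sum]; exact Finset.sum_congr rfl fun i _ => JJ_ww i

lemma JJ_sig {N : ℕ} : JJ (sig N 1) = sig N 1 := by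
  simp only [JJ, th_sig]; exact (sig_eq N).symm

lemma JJ_X {N : ℕ} (m : Fin N) : JJ (X m : MvP N) = X m := by
  simp [JJ, th_X]

lemma D2_ww {N : ℕ} (m : Fin N) : D2 (ww m : MvP N) = 0 := by
  refine Finset.sum_eq_zero fun i _ => ?_
  rw [th_ww]; split_ifs with h <;> simp [th_zero, th_ww, h]

lemma D2_X {N : ℕ} (m : Fin N) : D2 (X m : MvP N) = 0 := by
  refine Finset.sum_eq_zero fun i _ => ?_
  rw [th_X]; split_ifs with h <;> simp [th_zero, th_X, h]

lemma D2_tauSub {N : ℕ} : D2 (tauSub N) = 0 := by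
  rw [tauSub_eq, D2_sum]; simp [D2_ww]

lemma D2_sig {N : ℕ} : D2 (sig N 1) = 0 := by
  rw [sig_eq, D2_sum]; simp [D2_X]

lemma GG_sig_tauSub {N : ℕ} :
    GG (sig N 1) (tauSub N) = sig N 1 * tauSub N - N * tauTop N := by
  simp only [GG, th_sig, th_tauSub, mul_sub, X_ww, Finset.sum_sub_distrib, ← Finset.sum_mul,
    ← sig_eq]
  simp

lemma GG_X_tauSub {N : ℕ} (m : Fin N) :
    GG (X m) (tauSub N) = X m * tauSub N - tauTop N := by
  simp only [GG, th_X, th_tauSub]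
  simp [mul_sub, X_ww]

lemma GG_ww_sig {N : ℕ} (m : Fin N) :
    GG (ww m) (sig N 1) = ww m * sig N 1 - tauTop N := by
  simp only [GG, th_ww, th_sig]
  rw [eq_sub_iff_add_eq, ← X_ww m, sig_eq, Finset.mul_sum,
    ← Finset.sum_erase_add _ _ (Finset.mem_univ m),
    ← Finset.sum_erase_add Finset.univ _ (Finset.mem_univ m)]
  simp only [if_true, zero_mul, add_zero]
  rw [mul_comm (X m)]
  congr 1
  refine Finset.sum_congr rfl fun i hi => ?_
  rw [if_neg (Finset.ne_of_mem_erase hi)]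
lemma mG_r {N d : ℕ} [NeZero N] (s : SpinV N d) (c : Fin N → Fin d) (p : MvP N) :
    ∑ i : Fin N, C (sComp s i c) * p = C (Lam s c) * p := by
  rw [← Finset.sum_mul, ← map_sum]; simp [Lam]

lemma mF_tau {N d : ℕ} [NeZero N] (s : SpinV N d) (k : ℕ) :
    (fun c => tauTop N ^ k * (C (Lam s c) * tauTop N)) = mF s 0 0 (k + 1) := by
  funext c; simp only [mF]; ring

lemma stab_F {N d n : ℕ} [NeZero N] (hN : 3 ≤ N) (a : ℝ) (s : SpinV N d) (α β k : ℕ)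
    (hα : α ≤ 1) (hβ : β ≤ 1)
    (h : α + β * (N - 1) + k * N ≤ n) : Stab a n (mF s α β k) := by
  have hp := mF_mem s α β k hα hβ h
  have hcN : (C (N : ℂ) : MvP N) = (N : MvP N) := map_natCast C N
  interval_cases α <;> interval_cases β
  · refine two_term hN a n 0 0 0 0 k _ _ (fun c => ?_) (fun c => ?_) (fun c => ?_) hp hp
    · simp [JJ, th_C]
    · simp [D2, th_C, th_zero]
    · simpa using (HasSym.C (N := N) (Lam s c)).toE
  · refine two_term hN a n 0 0 N (N - 1) k _ _ (fun c => ?_) (fun c => ?_) (fun c => ?_) hp hp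
    · simp [JJ_C_mul, JJ_tauSub]; ring
    · simp [D2_C_mul, D2_tauSub]
    · convert ((HasSym.C (N := N) (Lam s c)).mul HasSym.tauSub).toE using 1 <;> simp; ring
  · refine two_term hN a n 0 0 2 1 k _ _ (fun c => ?_) (fun c => ?_) (fun c => ?_) hp hp
    · simp [JJ_C_mul, JJ_sig]
    · simp [D2_C_mul, D2_sig]
    · convert ((HasSym.C (N := N) (Lam s c)).mul HasSym.sig).toE using 1 <;> simp [map_ofNat]; ring
  · refine two_term hN a n 2 (-2 * N) (N + 2) N k _ (fun c => C (Lam s c) * tauTop N)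
      (fun c => ?_) (fun c => ?_) (fun c => ?_) hp ?_
    · simp only [pow_one, JJ_C_mul]
      simp only [JJ_mul, JJ_sig, JJ_tauSub, hcN]; ring
    · simp only [pow_one, D2_C_mul]
      simp only [D2_mul, D2_sig, D2_tauSub, GG_sig_tauSub, map_mul, map_neg,
        hcN, map_ofNat]; ring
    · convert ((HasSym.C (N := N) (Lam s c)).mul (HasSym.sig.mul HasSym.tauSub)).toE using 1
      · simp only [pow_one]
      · simp only [pow_one, map_add, hcN, map_ofNat]; ring
    · rw [mF_tau]
      apply mF_mem _ _ _ _ (by omega) (by omega)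
      have : (k + 1) * N = k * N + N := by ring
      omega

lemma stab_G {N d n : ℕ} [NeZero N] (hN : 3 ≤ N) (a : ℝ) (s : SpinV N d) (β k : ℕ) (hβ : β ≤ 1)
    (h : β * (N - 1) + k * N + 1 ≤ n) : Stab a n (mG s β k) := by
  have hp := mG_mem s β k hβ h
  have hcN : (C (N : ℂ) : MvP N) = (N : MvP N) := map_natCast C N
  interval_cases β
  · refine two_term hN a n 0 0 2 1 k _ _ (fun c => ?_) (fun c => ?_) (fun c => ?_) hp hp
    · simp [JJ_sum, JJ_C_mul, JJ_X]
    · simp [D2_sum, D2_C_mul, D2_X]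
    · rw [Finset.mul_sum]
      refine HasE.sum _ _ _ fun i _ => ?_
      convert (HasSym.C (N := N) (sComp s i c)).mulE (HasE_X hN i) using 1
      · simp
      · simp [map_ofNat]; ring
  · refine two_term hN a n 2 (-2) (N + 2) N k _ (fun c => C (Lam s c) * tauTop N)
      (fun c => ?_) (fun c => ?_) (fun c => ?_) hp ?_
    · simp only [JJ_sum, Finset.mul_sum]
      refine Finset.sum_congr rfl fun i _ => ?_
      simp only [pow_one, JJ_C_mul]
      simp only [JJ_mul, JJ_X, JJ_tauSub, hcN]; ring
    · simp only [← mG_r]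
      simp only [D2_sum, Finset.mul_sum, ← Finset.sum_add_distrib]
      refine Finset.sum_congr rfl fun i _ => ?_
      simp only [pow_one, D2_C_mul]
      simp only [D2_mul, D2_X, D2_tauSub, GG_X_tauSub, map_neg, map_ofNat]; ring
    · rw [Finset.mul_sum]
      refine HasE.sum _ _ _ fun i _ => ?_
      convert ((HasSym.C (N := N) (sComp s i c)).mul HasSym.tauSub).mulE (HasE_X hN i) using 1
      · ring
      · simp only [pow_one, map_add, hcN, map_ofNat]; ring
    · rw [mF_tau]
      apply mF_mem _ _ _ _ (by omega) (by omega)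
      have : (k + 1) * N = k * N + N := by ring
      omega

lemma stab_Q {N d n : ℕ} [NeZero N] (hN : 3 ≤ N) (a : ℝ) (s : SpinV N d) (α k : ℕ) (hα : α ≤ 1)
    (h : α + k * N + (N - 1) ≤ n) : Stab a n (mQ s α k) := by
  have hp := mQ_mem s α k hα h
  have hcN : (C (N : ℂ) : MvP N) = (N : MvP N) := map_natCast C N
  interval_cases α
  · refine two_term hN a n 0 0 N (N - 1) k _ _ (fun c => ?_) (fun c => ?_) (fun c => ?_) hp hp
    · simp only [JJ_sum, Finset.mul_sum]
      refine Finset.sum_congr rfl fun i _ => ?_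
      simp only [pow_zero, mul_one, JJ_C_mul, JJ_ww, map_sub, map_one, hcN]; ring
    · simp [D2_sum, D2_C_mul, D2_ww]
    · rw [Finset.mul_sum]
      refine HasE.sum _ _ _ fun i _ => ?_
      convert (HasSym.C (N := N) (sComp s i c)).mulE (HasE_ww hN i) using 1
      · simp
      · simp; ring
  · refine two_term hN a n 2 (-2) (N + 2) N k _ (fun c => C (Lam s c) * tauTop N)
      (fun c => ?_) (fun c => ?_) (fun c => ?_) hp ?_
    · simp only [JJ_sum, Finset.mul_sum]
      refine Finset.sum_congr rfl fun i _ => ?_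
      simp only [pow_one, JJ_C_mul]
      simp only [JJ_mul, JJ_ww, JJ_sig, hcN]; ring
    · simp only [← mG_r]
      simp only [D2_sum, Finset.mul_sum, ← Finset.sum_add_distrib]
      refine Finset.sum_congr rfl fun i _ => ?_
      simp only [pow_one, D2_C_mul]
      simp only [D2_mul, D2_ww, D2_sig, GG_ww_sig, map_neg, map_ofNat]; ring
    · rw [Finset.mul_sum]
      refine HasE.sum _ _ _ fun i _ => ?_
      convert ((HasSym.C (N := N) (sComp s i c)).mul HasSym.sig).mulE (HasE_ww hN i) using 1
      · ring
      · simp only [pow_one, map_add, hcN, map_ofNat]; ring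
    · rw [mF_tau]
      apply mF_mem _ _ _ _ (by omega) (by omega)
      have : (k + 1) * N = k * N + N := by ring
      omega

lemma gen_F {N d n : ℕ} [NeZero N] (hN : 3 ≤ N) (a : ℝ) {Φ : SpinPoly N d}
    (h : Φ ∈ T2genF N d n) : Stab a n Φ := by
  obtain ⟨s, F, h0, h1, h2, rfl⟩ := h
  have ht := trunc ![sig N 1, tauSub N, tauTop N] ![1, N - 1, N]
    (by intro j; fin_cases j; exacts [hom_sig N, hom_tauSub N, hom_tau N]) F n h2
  simp only [Fin.sum_univ_three, Fin.prod_univ_three, Matrix.cons_val] at ht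
  rw [ht]
  have : (fun c : Fin N → Fin d => C (Lam s c) * ∑ m ∈ F.support.filter
      (fun m => m 0 * 1 + m 1 * (N - 1) + m 2 * N ≤ n),
      C (F.coeff m) * (sig N 1 ^ m 0 * tauSub N ^ m 1 * tauTop N ^ m 2))
      = ∑ m ∈ F.support.filter (fun m => m 0 * 1 + m 1 * (N - 1) + m 2 * N ≤ n),
        F.coeff m • mF s (m 0) (m 1) (m 2) := by
    funext c
    rw [Finset.sum_apply, Finset.mul_sum]
    refine Finset.sum_congr rfl fun m _ => ?_
    rw [Pi.smul_apply, smul_eq_C_mul]; simp only [mF]; ring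
  rw [this]
  refine Stab.sum _ _ fun m hm => Stab.smul _ ?_
  rw [Finset.mem_filter] at hm
  exact stab_F hN a s _ _ _ ((deg_le_of_mem hm.1 0).trans h0) ((deg_le_of_mem hm.1 1).trans h1)
    (by simpa using hm.2)

lemma gen_G {N d n : ℕ} [NeZero N] (hN : 3 ≤ N) (a : ℝ) {Φ : SpinPoly N d}
    (h : Φ ∈ T2genG N d n) : Stab a n Φ := by
  obtain ⟨s, F, h0, h2, rfl⟩ := h
  have ht := trunc ![tauSub N, tauTop N] ![N - 1, N]
    (by intro j; fin_cases j; exacts [hom_tauSub N, hom_tau N]) F (n - 1) (by omega)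
  simp only [Fin.sum_univ_two, Fin.prod_univ_two, Matrix.cons_val] at ht
  rw [ht]
  have : (fun c : Fin N → Fin d => ∑ i : Fin N, C (sComp s i c) * (X i * ∑ m ∈ F.support.filter
      (fun m => m 0 * (N - 1) + m 1 * N ≤ n - 1),
      C (F.coeff m) * (tauSub N ^ m 0 * tauTop N ^ m 1)))
      = ∑ m ∈ F.support.filter (fun m => m 0 * (N - 1) + m 1 * N ≤ n - 1),
        F.coeff m • mG s (m 0) (m 1) := by
    funext c
    rw [Finset.sum_apply]
    simp only [Finset.mul_sum]
    rw [Finset.sum_comm]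
    refine Finset.sum_congr rfl fun m _ => ?_
    rw [Pi.smul_apply, smul_eq_C_mul]; simp only [mG, Finset.mul_sum]
    refine Finset.sum_congr rfl fun i _ => ?_
    ring
  rw [this]
  refine Stab.sum _ _ fun m hm => Stab.smul _ ?_
  rw [Finset.mem_filter] at hm
  exact stab_G hN a s _ _ ((deg_le_of_mem hm.1 0).trans h0) (by have := hm.2; omega)

lemma gen_Q {N d n : ℕ} [NeZero N] (hN : 3 ≤ N) (a : ℝ) {Φ : SpinPoly N d}
    (h : Φ ∈ T2genQ N d n) : Stab a n Φ := by
  obtain ⟨s, F, h0, h2, rfl⟩ := h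
  have ht := trunc ![sig N 1, tauTop N] ![1, N]
    (by intro j; fin_cases j; exacts [hom_sig N, hom_tau N]) F (n - (N - 1)) (by omega)
  simp only [Fin.sum_univ_two, Fin.prod_univ_two, Matrix.cons_val] at ht
  rw [ht]
  have : (fun c : Fin N → Fin d => ∑ i : Fin N, C (sComp s i c) *
      ((∏ j ∈ Finset.univ.erase i, X j) * ∑ m ∈ F.support.filter
      (fun m => m 0 * 1 + m 1 * N ≤ n - (N - 1)),
      C (F.coeff m) * (sig N 1 ^ m 0 * tauTop N ^ m 1)))
      = ∑ m ∈ F.support.filter (fun m => m 0 * 1 + m 1 * N ≤ n - (N - 1)),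
        F.coeff m • mQ s (m 0) (m 1) := by
    funext c
    rw [Finset.sum_apply]
    simp only [Finset.mul_sum]
    rw [Finset.sum_comm]
    refine Finset.sum_congr rfl fun m _ => ?_
    rw [Pi.smul_apply, smul_eq_C_mul]; simp only [mQ, Finset.mul_sum]
    refine Finset.sum_congr rfl fun i _ => ?_
    unfold ww
    ring
  rw [this]
  refine Stab.sum _ _ fun m hm => Stab.smul _ ?_
  rw [Finset.mem_filter] at hm
  exact stab_Q hN a s _ _ ((deg_le_of_mem hm.1 0).trans h0) (by have := hm.2; omega)

theorem stmt_9 (N d : ℕ) [NeZero N] (hN : 3 ≤ N) (hd : 1 ≤ d) (a : ℝ) (n : ℕ)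
    (Φ : SpinPoly N d) (hΦ : Φ ∈ T2space N d n) :
    ∃ Φ' ∈ T2space N d n, ∀ c : Fin N → Fin d, phi N (Φ' c) = Hbar2op N a (Φ c) := by
  change Stab a n Φ
  unfold T2space at hΦ
  induction hΦ using Submodule.span_induction with
  | mem x hx =>
    rcases hx with (hx | hx) | hx
    · exact gen_F hN a hx
    · exact gen_G hN a hx
    · exact gen_Q hN a hx
  | zero => exact Stab.zero
  | add x y _ _ hx hy => exact hx.add hy
  | smul r x _ hx => exact hx.smul r
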